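/- arXiv:1402.4495 — 2 statements merged into one kernel-verified Lean document; each statement's English description precedes it below -/
import Mathlib

section
/- Let A be a semisimple ring that is an algebra over ℚ, and let G be a finite group acting on A by ring automorphisms. Then the twisted group ring A{G} is semisimple, where A{G} is the free left A-module with basis G, with multiplication determined by (a·σ)(b·τ) = (a·σ(b))·(στ) for a, b ∈ A and σ, τ ∈ G. (Lemma 13 of the paper.) -/
/-- The twisted group ring `A{G}` attached to an action of a group `G` on a ring `A` by ring
automorphisms: as an additive group it is the free left `A`-module with basis `G` (realized as
functions `G → A`, `G` being finite), and the multiplication is determined by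
`(a·σ)(b·τ) = (a·σ(b))·(στ)`. -/
def TwistedGroupRing (A G : Type*) := G → A

namespace TwistedGroupRing

variable {A G : Type*} [Ring A] [Group G] [Fintype G] [DecidableEq G] [MulSemiringAction G A]

instance : AddCommGroup (TwistedGroupRing A G) := Pi.addCommGroup

instance : Mul (TwistedGroupRing A G) :=
  ⟨fun f g σ => ∑ τ : G, f τ * (τ • g (τ⁻¹ * σ))⟩

theorem mul_def (f g : TwistedGroupRing A G) (σ : G) :
    (f * g) σ = ∑ τ : G, f τ * (τ • g (τ⁻¹ * σ)) := rfl

instance : One (TwistedGroupRing A G) := ⟨Pi.single (1 : G) (1 : A)⟩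

theorem one_def : (1 : TwistedGroupRing A G) = Pi.single (1 : G) (1 : A) := rfl

noncomputable instance instRing : Ring (TwistedGroupRing A G) where
  __ := (inferInstance : AddCommGroup (TwistedGroupRing A G))
  mul := (· * ·)
  one := 1
  left_distrib f g h := funext fun σ => by
    simp only [mul_def]
    show ∑ τ : G, f τ * (τ • (g (τ⁻¹ * σ) + h (τ⁻¹ * σ))) = _
    simp only [smul_add, mul_add, Finset.sum_add_distrib]
    rfl
  right_distrib f g h := funext fun σ => by
    simp only [mul_def]
    show ∑ τ : G, (f τ + g τ) * (τ • h (τ⁻¹ * σ)) = _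
    simp only [add_mul, Finset.sum_add_distrib]
    rfl
  zero_mul f := funext fun σ => by
    simp only [mul_def]
    show ∑ τ : G, (0 : A) * (τ • f (τ⁻¹ * σ)) = (0 : A)
    simp
  mul_zero f := funext fun σ => by
    simp only [mul_def]
    show ∑ τ : G, f τ * (τ • (0 : A)) = (0 : A)
    simp
  one_mul f := funext fun σ => by
    rw [mul_def, Finset.sum_eq_single (1 : G)]
    · rw [one_def, Pi.single_eq_same, one_mul, one_smul, inv_one, one_mul]
    · intro τ _ hτ
      rw [one_def, Pi.single_eq_of_ne hτ, zero_mul]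
    · intro h; exact absurd (Finset.mem_univ _) h
  mul_one f := funext fun σ => by
    rw [mul_def, Finset.sum_eq_single σ]
    · rw [one_def, inv_mul_cancel, Pi.single_eq_same, smul_one, mul_one]
    · intro τ _ hτ
      have hne : τ⁻¹ * σ ≠ 1 := fun hcontra => hτ (by
        have := congrArg (fun x => τ * x) hcontra
        simpa [mul_assoc] using this.symm)
      rw [one_def, Pi.single_eq_of_ne hne, smul_zero, mul_zero]
    · intro h; exact absurd (Finset.mem_univ _) h
  mul_assoc f g h := funext fun σ => by
    have lhs : (f * g * h) σ
        = ∑ τ : G, ∑ υ : G, f υ * (υ • g (υ⁻¹ * τ)) * (τ • h (τ⁻¹ * σ)) := by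
      rw [mul_def]
      refine Finset.sum_congr rfl fun τ _ => ?_
      rw [mul_def, Finset.sum_mul]
    have rhs : (f * (g * h)) σ
        = ∑ υ : G, ∑ ρ : G, f υ * ((υ • g ρ) * ((υ * ρ) • h (ρ⁻¹ * (υ⁻¹ * σ)))) := by
      rw [mul_def]
      refine Finset.sum_congr rfl fun υ _ => ?_
      rw [mul_def, Finset.smul_sum, Finset.mul_sum]
      refine Finset.sum_congr rfl fun ρ _ => ?_
      rw [smul_mul', smul_smul]
    rw [lhs, rhs, Finset.sum_comm]
    refine Finset.sum_congr rfl fun υ _ => ?_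
    refine (Fintype.sum_equiv (Equiv.mulLeft υ) _ _ fun ρ => ?_).symm
    simp only [Equiv.coe_mulLeft, inv_mul_cancel_left, mul_inv_rev, mul_assoc]

end TwistedGroupRing

/-!
This is Maschke's averaging argument in a semilinear setting. If `π` is an `A`-linear map between
`A{G}`-modules, then each conjugate `v ↦ σ⁻¹ π(σ v)` is again `A`-linear, because the twists by `σ`
and by `σ⁻¹` cancel, and the sum of all the conjugates commutes with `G`. Averaging an `A`-linear
projection onto an `A{G}`-submodule thus gives an `A{G}`-linear one as soon as `|G|` is invertible
in `A`.
-/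

namespace TwistedGroupRing

section FreeModule

variable {A G : Type*} [Ring A]

instance : Module A (TwistedGroupRing A G) := Pi.module G (fun _ => A) A

theorem smul_apply (a : A) (f : TwistedGroupRing A G) (σ : G) : (a • f) σ = a * f σ := rfl

/-- The group element `σ`, regarded as the basis element `1·σ` of the free `A`-module `A{G}`. -/
def of (A : Type*) {G : Type*} [Ring A] [DecidableEq G] (σ : G) : TwistedGroupRing A G :=
  Pi.single (M := fun _ => A) σ 1

theorem of_apply [DecidableEq G] (σ τ : G) : of A σ τ = if τ = σ then 1 else 0 := by
  rw [of, Pi.single_apply]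

theorem of_one [Group G] [DecidableEq G] : of A (1 : G) = 1 := rfl

theorem sum_smul_of [Fintype G] [DecidableEq G] (f : TwistedGroupRing A G) :
    ∑ σ, f σ • of A σ = f :=
  (pi_eq_sum_univ' f).symm

end FreeModule

section Multiplication

variable {A G : Type*} [Ring A] [Group G] [Fintype G] [DecidableEq G] [MulSemiringAction G A]

instance : IsScalarTower A (TwistedGroupRing A G) (TwistedGroupRing A G) where
  smul_assoc a f g := funext fun σ => by
    simp only [smul_eq_mul, mul_def, smul_apply, Finset.mul_sum, mul_assoc]

theorem of_mul_apply (σ : G) (f : TwistedGroupRing A G) (ρ : G) :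
    (of A σ * f) ρ = σ • f (σ⁻¹ * ρ) := by
  simp only [mul_def, of_apply, ite_mul, one_mul, zero_mul, Finset.sum_ite_eq', Finset.mem_univ,
    if_true]

theorem of_mul_of (σ τ : G) : of A σ * of A τ = of A (σ * τ) := funext fun ρ => by
  simp only [of_mul_apply, of_apply, inv_mul_eq_iff_eq_mul, smul_ite, smul_one, smul_zero]

theorem of_mul_smul (σ : G) (a : A) (f : TwistedGroupRing A G) :
    of A σ * a • f = (σ • a) • (of A σ * f) := funext fun ρ => by
  simp only [of_mul_apply, smul_apply, smul_mul']

end Multiplication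

variable {A G V W : Type*} [Ring A] [Group G] [Fintype G] [DecidableEq G] [MulSemiringAction G A]
  [AddCommGroup V] [Module (TwistedGroupRing A G) V]
  [AddCommGroup W] [Module (TwistedGroupRing A G) W]

theorem of_smul_of_smul (σ τ : G) (v : V) : of A σ • of A τ • v = of A (σ * τ) • v := by
  rw [smul_smul, of_mul_of]

theorem of_inv_smul_of_smul (σ : G) (v : V) : of A σ⁻¹ • of A σ • v = v := by
  rw [of_smul_of_smul, inv_mul_cancel, of_one, one_smul]

variable [Module A V] [IsScalarTower A (TwistedGroupRing A G) V]
  [Module A W] [IsScalarTower A (TwistedGroupRing A G) W]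

theorem of_smul_smul (σ : G) (a : A) (v : V) : of A σ • a • v = (σ • a) • of A σ • v := by
  rw [← smul_one_smul (TwistedGroupRing A G) a v, smul_smul, of_mul_smul, mul_one, smul_assoc]

theorem smul_eq_sum_smul_of_smul (f : TwistedGroupRing A G) (v : V) :
    f • v = ∑ σ, f σ • of A σ • v := by
  simp_rw [← smul_assoc, ← Finset.sum_smul, sum_smul_of]

/-- The `A{G}`-linear map given by an `A`-linear map that commutes with the elements of `G`. -/
def equivariantOfLinearOfComm (f : V →ₗ[A] W) (h : ∀ (σ : G) v, f (of A σ • v) = of A σ • f v) :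
    V →ₗ[TwistedGroupRing A G] W where
  __ := f.toAddHom
  map_smul' g v := by
    change f (g • v) = g • f v
    simp only [smul_eq_sum_smul_of_smul g, map_sum, map_smul, h]

/-- The conjugate by `σ` of an `A`-linear map `π` between `A{G}`-modules, one of the terms averaged
in Maschke's argument. -/
noncomputable def conjugate (σ : G) (π : V →ₗ[A] W) : V →ₗ[A] W where
  toFun v := of A σ⁻¹ • π (of A σ • v)
  map_add' v w := by rw [smul_add, map_add, smul_add]
  map_smul' a v := by rw [of_smul_smul, map_smul, of_smul_smul, inv_smul_smul, RingHom.id_apply]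

theorem conjugate_apply (σ : G) (π : V →ₗ[A] W) (v : V) :
    conjugate σ π v = of A σ⁻¹ • π (of A σ • v) := rfl

theorem conjugate_of_smul (σ τ : G) (π : V →ₗ[A] W) (v : V) :
    conjugate σ π (of A τ • v) = of A τ • conjugate (σ * τ) π v := by
  simp only [conjugate_apply, of_smul_of_smul, mul_inv_rev, mul_inv_cancel_left]

theorem conjugate_apply_of_leftInverse {π : V →ₗ[A] W} {i : W →ₗ[TwistedGroupRing A G] V}
    (h : Function.LeftInverse π i) (σ : G) (w : W) : conjugate σ π (i w) = w := by
  rw [conjugate_apply, ← i.map_smul, h, of_inv_smul_of_smul]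

theorem sum_conjugate_of_smul (τ : G) (π : V →ₗ[A] W) (v : V) :
    ∑ σ : G, conjugate σ π (of A τ • v) = of A τ • ∑ σ : G, conjugate σ π v := by
  simp only [conjugate_of_smul, ← Finset.smul_sum]
  exact congrArg (of A τ • ·) (Equiv.sum_comp (Equiv.mulRight τ) fun σ => conjugate σ π v)

/-- The sum of the conjugates of an `A`-linear map `π` between `A{G}`-modules, an `A{G}`-linear map.
It is `|G|` times the average of `π`: dividing by `|G|` is postponed until `|G|` is invertible. -/
noncomputable def sumOfConjugates (π : V →ₗ[A] W) : V →ₗ[TwistedGroupRing A G] W :=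
  equivariantOfLinearOfComm (∑ σ : G, conjugate σ π) fun τ v => by
    simp only [LinearMap.sum_apply, sum_conjugate_of_smul]

theorem sumOfConjugates_apply (π : V →ₗ[A] W) (v : V) :
    sumOfConjugates (G := G) π v = ∑ σ : G, conjugate σ π v :=
  LinearMap.sum_apply _ _ _

theorem sumOfConjugates_apply_of_leftInverse {π : V →ₗ[A] W} {i : W →ₗ[TwistedGroupRing A G] V}
    (h : Function.LeftInverse π i) (w : W) :
    sumOfConjugates (G := G) π (i w) = (Fintype.card G : A) • w := by
  simp only [sumOfConjugates_apply, conjugate_apply_of_leftInverse h, Finset.sum_const,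
    Finset.card_univ, Nat.cast_smul_eq_nsmul]

theorem exists_equivariant_leftInverse (hG : IsUnit (Fintype.card G : A)) {π : V →ₗ[A] W}
    {i : W →ₗ[TwistedGroupRing A G] V} (h : Function.LeftInverse π i) :
    ∃ p : V →ₗ[TwistedGroupRing A G] W, Function.LeftInverse p i := by
  have hbij : Function.Bijective (sumOfConjugates π ∘ₗ i) := by
    have hsmul : ⇑(sumOfConjugates π ∘ₗ i) = ((Fintype.card G : A) • ·) :=
      funext (sumOfConjugates_apply_of_leftInverse h)
    exact hsmul ▸ hG.smul_bijective
  let e := LinearEquiv.ofBijective _ hbij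
  exact ⟨e.symm.toLinearMap ∘ₗ sumOfConjugates π, e.symm_apply_apply⟩

theorem isSemisimpleModule_of_isUnit_card [IsSemisimpleModule A V]
    (hG : IsUnit (Fintype.card G : A)) : IsSemisimpleModule (TwistedGroupRing A G) V where
  exists_isCompl I := by
    obtain ⟨π, hπ⟩ := IsSemisimpleModule.extension_property (I.subtype.restrictScalars A)
      I.subtype_injective LinearMap.id
    obtain ⟨p, hp⟩ := exists_equivariant_leftInverse hG (i := I.subtype) (LinearMap.congr_fun hπ)
    exact ⟨LinearMap.ker p, LinearMap.isCompl_of_proj hp⟩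

end TwistedGroupRing

theorem stmt1_general (A G : Type*) [Ring A] [IsSemisimpleRing A]
    [Group G] [Fintype G] [DecidableEq G] [MulSemiringAction G A]
    (hG : IsUnit (Fintype.card G : A)) :
    IsSemisimpleRing (TwistedGroupRing A G) :=
  TwistedGroupRing.isSemisimpleModule_of_isUnit_card hG

/-- **Lemma 13**: if `A` is a semisimple ring which is a `ℚ`-algebra and `G` is a finite group
acting on `A` by ring automorphisms, then the twisted group ring `A{G}` is semisimple. -/
theorem stmt1 (A G : Type*) [Ring A] [Algebra ℚ A] [IsSemisimpleRing A]
    [Group G] [Fintype G] [DecidableEq G] [MulSemiringAction G A] :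
    IsSemisimpleRing (TwistedGroupRing A G) := by
  have hG : IsUnit (Fintype.card G : ℚ) := (Nat.cast_ne_zero.mpr Fintype.card_ne_zero).isUnit
  exact stmt1_general A G (by simpa only [map_natCast] using hG.map (algebraMap ℚ A))
end

section
/- Let E be a number field and let Σ be a set of real embeddings of E (field embeddings σ : E → ℝ). Then every unit u of the ℝ-algebra E ⊗_ℚ ℝ can be written as u = (a ⊗ 1)·y, where a ∈ E^× and y is a unit of E ⊗_ℚ ℝ such that (σ ⊗ id_ℝ)(y) > 0 for every σ ∈ Σ. (This is the commutative content of the first identity (6) in Lemma 6 of the paper, proved using that E^× is dense in (E ⊗_ℚ ℝ)^×.) -/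
open TensorProduct

/-!
Write `u = ∑ eᵢ ⊗ rᵢ`, so that `(σ ⊗ id)(u) = ∑ σ(eᵢ) rᵢ`, and approximate the coefficients `rᵢ` by
rationals `qᵢ`. For `a = ∑ qᵢ eᵢ` the quotients `(σ ⊗ id)(u) / σ(a)` are close to `1`, uniformly
over any set of embeddings `σ` that is compact for pointwise convergence, such as a finite one.
These quotients are the values `(σ ⊗ id)(y)` at `y = (a ⊗ 1)⁻¹ u`, and positivity is membership in
the neighbourhood `(0, ∞)` of `1`.
-/

section

open Filter Topology Algebra.TensorProduct

variable {F E K : Type*} [CommSemiring F]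

theorem eventually_forall_ne_zero_and_div_mem {X Y : Type*} [TopologicalSpace X]
    [TopologicalSpace Y] [GroupWithZero K] [TopologicalSpace K] [ContinuousMul K] [ContinuousInv₀ K]
    [T1Space K] {f : X → Y → K} (hf : Continuous (Function.uncurry f)) {C : Set Y}
    (hC : IsCompact C) {x₀ : X} (h₀ : ∀ y ∈ C, f x₀ y ≠ 0) {V : Set K} (hV : V ∈ 𝓝 1) :
    ∀ᶠ x in 𝓝 x₀, ∀ y ∈ C, f x y ≠ 0 ∧ f x₀ y / f x y ∈ V := by
  refine hC.eventually_forall_of_forall_eventually fun y hy => ?_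
  have hne : ∀ᶠ z : X × Y in 𝓝 (x₀, y), f z.1 z.2 ≠ 0 :=
    hf.continuousAt.eventually_ne (h₀ y hy)
  have hdiv : ContinuousAt (fun z : X × Y => f x₀ z.2 / f z.1 z.2) (x₀, y) :=
    (hf.comp (continuous_const.prodMk continuous_snd)).continuousAt.div hf.continuousAt (h₀ y hy)
  have hmem : ∀ᶠ z : X × Y in 𝓝 (x₀, y), f x₀ z.2 / f z.1 z.2 ∈ V :=
    hdiv.preimage_mem_nhds (by rwa [div_self (h₀ y hy)])
  exact hne.and hmem

theorem productMap_id_sum_tmul [Semiring E] [Algebra F E] [CommSemiring K] [Algebra F K]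
    {ι : Type*} (s : Finset ι) (e : ι → E) (r : ι → K) (σ : E →ₐ[F] K) :
    productMap σ (AlgHom.id F K) (∑ i ∈ s, e i ⊗ₜ r i) = ∑ i ∈ s, σ (e i) * r i := by
  simp

theorem exists_forall_ne_zero_and_productMap_div_mem [Semiring E] [Algebra F E] [Field K]
    [Algebra F K] [TopologicalSpace K] [IsTopologicalDivisionRing K] [T1Space K]
    (hF : DenseRange (algebraMap F K)) {S : Set (E →ₐ[F] K)}
    (hS : IsCompact ((⇑) '' S : Set (E → K))) {t : E ⊗[F] K}
    (ht : ∀ σ ∈ S, productMap σ (AlgHom.id F K) t ≠ 0) {V : Set K} (hV : V ∈ 𝓝 1) :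
    ∃ a : E, ∀ σ ∈ S, σ a ≠ 0 ∧ productMap σ (AlgHom.id F K) t / σ a ∈ V := by
  obtain ⟨s, rfl⟩ := TensorProduct.exists_finset t
  simp only [productMap_id_sum_tmul] at ht ⊢
  let f (x : E × K → K) (v : E → K) : K := ∑ p ∈ s, v p.1 * x p
  have hf : Continuous (Function.uncurry f) := by
    unfold f Function.uncurry
    fun_prop
  have hnear : ∀ᶠ x in 𝓝 Prod.snd, ∀ v ∈ ((⇑) '' S : Set (E → K)),
      f x v ≠ 0 ∧ f Prod.snd v / f x v ∈ V :=
    eventually_forall_ne_zero_and_div_mem hf hS (Set.forall_mem_image.2 ht) hV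
  obtain ⟨_, hx, q, rfl⟩ :=
    mem_closure_iff_nhds.1 (DenseRange.piMap (fun _ : E × K => hF) Prod.snd) _ hnear
  have hσ (σ : E →ₐ[F] K) : σ (∑ p ∈ s, q p • p.1) = f (Pi.map (fun _ => algebraMap F K) q) σ := by
    simp [f, Algebra.smul_def, mul_comm]
  refine ⟨∑ p ∈ s, q p • p.1, fun σ hσS => ?_⟩
  rw [hσ]
  exact hx σ (Set.mem_image_of_mem _ hσS)

theorem exists_units_eq_tmul_one_mul [Semiring E] [Algebra F E] [Semifield K] [Algebra F K]
    (a : Eˣ) (u : (E ⊗[F] K)ˣ) :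
    ∃ y : (E ⊗[F] K)ˣ, (u : E ⊗[F] K) = (a : E) ⊗ₜ 1 * (y : E ⊗[F] K) ∧
      ∀ σ : E →ₐ[F] K, productMap σ (AlgHom.id F K) (y : E ⊗[F] K) =
        productMap σ (AlgHom.id F K) (u : E ⊗[F] K) / σ a := by
  let b : (E ⊗[F] K)ˣ := Units.map (includeLeft : E →ₐ[F] E ⊗[F] K) a
  have hu : (u : E ⊗[F] K) = (a : E) ⊗ₜ 1 * (b⁻¹ * u).val :=
    congrArg Units.val (mul_inv_cancel_left b u).symm
  refine ⟨b⁻¹ * u, hu, fun σ => ?_⟩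
  have ha : σ a ≠ 0 := (a.isUnit.map σ).ne_zero
  rw [eq_div_iff ha, hu, map_mul, productMap_apply_tmul, map_one, mul_one, mul_comm]

theorem stmt4_general [Field E] [Algebra F E] [Field K] [Algebra F K] [TopologicalSpace K]
    [IsTopologicalDivisionRing K] [T1Space K] (hF : DenseRange (algebraMap F K))
    {S : Set (E →ₐ[F] K)} (hS : IsCompact ((⇑) '' S : Set (E → K))) {V : Set K} (hV : V ∈ 𝓝 1)
    (u : (E ⊗[F] K)ˣ) :
    ∃ (a : Eˣ) (y : (E ⊗[F] K)ˣ), (u : E ⊗[F] K) = (a : E) ⊗ₜ 1 * (y : E ⊗[F] K) ∧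
      ∀ σ ∈ S, productMap σ (AlgHom.id F K) (y : E ⊗[F] K) ∈ V := by
  obtain rfl | ⟨τ, hτ⟩ := S.eq_empty_or_nonempty
  · exact ⟨1, u, by simp [← one_def], by simp⟩
  obtain ⟨a, ha⟩ := exists_forall_ne_zero_and_productMap_div_mem hF hS
    (fun σ _ => (u.isUnit.map (productMap σ (AlgHom.id F K))).ne_zero) hV
  have ha₀ : a ≠ 0 := ne_zero_of_map (ha τ hτ).1
  obtain ⟨y, huy, hy⟩ := exists_units_eq_tmul_one_mul (Units.mk0 a ha₀) u
  exact ⟨Units.mk0 a ha₀, y, huy, fun σ hσ => hy σ ▸ (ha σ hσ).2⟩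

end

/-- **Lemma 6, first identity of (6), commutative form**: for a number field `E` and a set `Sigma0`
of real embeddings of `E`, every unit `u` of `E ⊗[ℚ] ℝ` can be written as `u = (a ⊗ 1) * y`
with `a ∈ Eˣ` and `y` a unit of `E ⊗[ℚ] ℝ` such that `(σ ⊗ id ℝ)(y) > 0` for all `σ ∈ Sigma0`. -/
theorem stmt4 (E : Type*) [Field E] [NumberField E] (Sigma0 : Set (E →+* ℝ))
    (u : (E ⊗[ℚ] ℝ)ˣ) :
    ∃ (a : Eˣ) (y : (E ⊗[ℚ] ℝ)ˣ),
      (u : E ⊗[ℚ] ℝ) = ((a : E) ⊗ₜ[ℚ] (1 : ℝ)) * (y : E ⊗[ℚ] ℝ) ∧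
      ∀ σ ∈ Sigma0,
        0 < Algebra.TensorProduct.productMap σ.toRatAlgHom (AlgHom.id ℚ ℝ) (y : E ⊗[ℚ] ℝ) := by
  have hcompact := ((Sigma0.toFinite.image RingHom.toRatAlgHom).image (⇑)).isCompact
  simpa using stmt4_general Rat.denseRange_cast hcompact (Ioi_mem_nhds one_pos) u
end
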